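/- arXiv:1605.01511 — 4 statements merged into one kernel-verified Lean document; each statement's English description precedes it below -/
import Mathlib

section
/- Let G = (V, E) be a finite directed graph with |V| = n ≥ 1 vertices in which every vertex has outdegree at most m, and let v ∈ V be any vertex. Then the number of simple cycles of G that contain v (i.e., simple cycles (C, η) with v ∈ C) is at most m · (m+1)^(n−1). -/
/-- A simple cycle of the directed graph with vertex set `V` and edge relation `E`:
a non-empty set of vertices `C` together with a bijection `η : C → C` such that
`(v, η v)` is an edge for every `v ∈ C`, and for every `v ∈ C` and `n : ℕ`,
`η^[n] v = v` if and only if `n` is a multiple of `|C|`. -/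
structure SimpleCycle {V : Type} [Fintype V] (E : V → V → Prop) where
  C : Finset V
  nonempty : C.Nonempty
  η : {v // v ∈ C} → {v // v ∈ C}
  bij : Function.Bijective η
  edge : ∀ v : {v // v ∈ C}, E v.1 (η v).1
  period : ∀ (v : {v // v ∈ C}) (n : ℕ), η^[n] v = v ↔ C.card ∣ n

open Classical in
/-- The successor of `u` along the cycle `c`, or `none` off the cycle. -/
noncomputable def cycSucc {V : Type} [Fintype V] {E : V → V → Prop} (c : SimpleCycle E) (u : V) :
    Option {u' : V // E u u'} :=
  if h : u ∈ c.C then some ⟨(c.η ⟨u, h⟩).1, c.edge ⟨u, h⟩⟩ else none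

theorem cycSucc_inj {V : Type} [Fintype V] {E : V → V → Prop} (c d : SimpleCycle E)
    (h : ∀ u, cycSucc c u = cycSucc d u) : c = d := by
  have hC : c.C = d.C := by
    ext u
    have := h u
    unfold cycSucc at this
    by_cases h1 : u ∈ c.C <;> by_cases h2 : u ∈ d.C <;> simp_all
  obtain ⟨C, ne, η, b, e, p⟩ := c
  obtain ⟨D, ne', η', b', e', p'⟩ := d
  obtain rfl : C = D := hC
  have : η = η' := by
    funext ⟨u, hu⟩
    have := h u
    simp only [cycSucc, hu, dif_pos, Option.some.injEq, Subtype.mk.injEq] at this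
    exact Subtype.ext this
  subst this
  rfl

/-- In a finite directed graph with `n ≥ 1` vertices, each of outdegree at most `m`,
the number of simple cycles containing a fixed vertex `v` is at most `m * (m + 1) ^ (n - 1)`. -/
theorem card_simpleCycle_through_vertex_le
    {V : Type} [Fintype V] (E : V → V → Prop) (n m : ℕ)
    (hn : Fintype.card V = n) (hn1 : 1 ≤ n) (v : V)
    (hout : ∀ u : V, {u' : V | E u u'}.ncard ≤ m) :
    Nat.card {c : SimpleCycle E // v ∈ c.C} ≤ m * (m + 1) ^ (n - 1) := by
  classical
  let F : {c : SimpleCycle E // v ∈ c.C} →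
      {u' : V // E v u'} × (∀ u : {u : V // u ≠ v}, Option {u' : V // E u.1 u'}) :=
    fun c => (⟨(c.1.η ⟨v, c.2⟩).1, c.1.edge ⟨v, c.2⟩⟩, fun u => cycSucc c.1 u.1)
  have hF : Function.Injective F := by
    intro c d h
    apply Subtype.ext
    apply cycSucc_inj
    intro u
    by_cases hu : u = v
    · subst hu
      have h1 := congrArg Prod.fst h
      simp only [cycSucc, c.2, d.2, dif_pos]
      exact congrArg some h1
    · exact congrFun (congrArg Prod.snd h) ⟨u, hu⟩
  have hcard : ∀ u : V, Fintype.card {u' : V // E u u'} ≤ m := by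
    intro u
    have := hout u
    rw [← Nat.card_coe_set_eq] at this
    rw [← Nat.card_eq_fintype_card]
    exact this
  refine (Nat.card_le_card_of_injective F hF).trans ?_
  rw [Nat.card_eq_fintype_card, Fintype.card_prod, Fintype.card_pi]
  refine Nat.mul_le_mul (hcard v) ?_
  refine (Finset.prod_le_pow_card _ _ (m + 1) ?_).trans ?_
  · intro u _
    rw [Fintype.card_option]
    exact Nat.succ_le_succ (hcard u.1)
  · rw [Finset.card_univ, Fintype.card_subtype_compl, Fintype.card_subtype_eq, hn]
end

section
/- Let G = (V, E) be a finite directed graph containing a simple cycle of length n. Define the directed graph G' = (V × {0,1}, E') where ((v, b), (v', b')) ∈ E' if and only if (v, v') ∈ E (for all b, b' ∈ {0,1}). Then G' has at least 2^n simple cycles. Concretely, if (C, η) is a simple cycle of G of length n, then for every function f : C → {0,1} the pair ({(v, f(v)) : v ∈ C}, (v, f(v)) ↦ (η(v), f(η(v)))) is a simple cycle of G', and distinct functions f yield distinct simple cycles. -/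
def liftEquiv {V : Type} [DecidableEq V] (C : Finset V) (f : {v // v ∈ C} → Bool) :
    {v // v ∈ C} ≃ {p // p ∈ C.attach.image (fun v => (v.1, f v))} where
  toFun v := ⟨(v.1, f v), Finset.mem_image.2 ⟨v, Finset.mem_attach _ _, rfl⟩⟩
  invFun p := ⟨p.1.1, by
    obtain ⟨v, _, hv⟩ := Finset.mem_image.1 p.2
    rw [← hv]; exact v.2⟩
  left_inv v := rfl
  right_inv p := by
    obtain ⟨p, hp⟩ := p
    obtain ⟨v, _, rfl⟩ := Finset.mem_image.1 hp
    rfl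

theorem card_lift {V : Type} [DecidableEq V] (C : Finset V) (f : {v // v ∈ C} → Bool) :
    (C.attach.image (fun v => (v.1, f v))).card = C.card := by
  have := Fintype.card_congr (liftEquiv C f)
  simpa only [Fintype.card_coe] using this.symm

/-- The lifted cycle `(v, f v) ↦ (η v, f (η v))`. -/
def liftCycle {V : Type} [Fintype V] [DecidableEq V] {E : V → V → Prop}
    (c : SimpleCycle E) (f : {v // v ∈ c.C} → Bool) :
    SimpleCycle (fun p q : V × Bool => E p.1 q.1) where
  C := c.C.attach.image (fun v => (v.1, f v))
  nonempty := c.nonempty.attach.image _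
  η := fun p => liftEquiv c.C f (c.η ((liftEquiv c.C f).symm p))
  bij := (liftEquiv c.C f).bijective.comp (c.bij.comp (liftEquiv c.C f).symm.bijective)
  edge := fun p => c.edge ((liftEquiv c.C f).symm p)
  period := by
    intro p n
    rw [card_lift, ← c.period ((liftEquiv c.C f).symm p) n]
    have h : Function.Semiconj (liftEquiv c.C f) c.η
        (fun p => liftEquiv c.C f (c.η ((liftEquiv c.C f).symm p))) := fun v => by simp
    have h2 := (h.iterate_right n) ((liftEquiv c.C f).symm p)
    rw [Equiv.apply_symm_apply] at h2
    rw [← h2, Equiv.eq_symm_apply]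

theorem liftCycle_injective {V : Type} [Fintype V] [DecidableEq V] {E : V → V → Prop}
    (c : SimpleCycle E) : Function.Injective (liftCycle c) := by
  intro f g h
  have hC : c.C.attach.image (fun v => (v.1, f v)) = c.C.attach.image (fun v => (v.1, g v)) :=
    congrArg SimpleCycle.C h
  funext v
  have hv : (v.1, f v) ∈ c.C.attach.image (fun v => (v.1, g v)) := by
    rw [← hC]; exact Finset.mem_image.2 ⟨v, Finset.mem_attach _ _, rfl⟩
  obtain ⟨w, _, hw⟩ := Finset.mem_image.1 hv
  have h1 : w = v := Subtype.ext (congrArg Prod.fst hw)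
  have h2 : g w = f v := congrArg Prod.snd hw
  rw [← h2, h1]

theorem simpleCycle_finite {V : Type} [Fintype V] (E : V → V → Prop) :
    Finite (SimpleCycle E) := by
  classical
  refine Finite.of_injective
    (fun c : SimpleCycle E =>
      (⟨c.C, c.η⟩ : (C : Finset V) × ({v // v ∈ C} → {v // v ∈ C}))) ?_
  rintro ⟨C, _, η, _, _, _⟩ ⟨C', _, η', _, _, _⟩ h
  simp only [Sigma.mk.injEq] at h
  obtain ⟨rfl, h⟩ := h
  obtain rfl := eq_of_heq h
  rfl

/-- If a finite directed graph `G = (V, E)` contains a simple cycle `c` of length `n`,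
then the graph `G'` on `V × {0,1}` with an edge `((v,b),(v',b'))` iff `(v,v') ∈ E`
has at least `2 ^ n` simple cycles.  Concretely, every function `f : c.C → Bool`
yields a simple cycle of `G'` on the vertex set `{(v, f v) : v ∈ c.C}`, and distinct
functions yield distinct simple cycles. -/
theorem two_pow_le_card_simpleCycle_prod_bool
    {V : Type} [Fintype V] [DecidableEq V] (E : V → V → Prop) (n : ℕ)
    (c : SimpleCycle E) (hc : c.C.card = n) :
    (∃ F : ({v // v ∈ c.C} → Bool) → SimpleCycle (fun p q : V × Bool => E p.1 q.1),
        Function.Injective F ∧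
        ∀ f, (F f).C = c.C.attach.image (fun v => (v.1, f v))) ∧
    2 ^ n ≤ Nat.card (SimpleCycle (fun p q : V × Bool => E p.1 q.1)) := by
  refine ⟨⟨liftCycle c, liftCycle_injective c, fun f => rfl⟩, ?_⟩
  have := simpleCycle_finite (fun p q : V × Bool => E p.1 q.1)
  have h := Nat.card_le_card_of_injective _ (liftCycle_injective c)
  simpa [hc] using h
end

section
/- Let G = (V, E) be a finite directed graph that is strongly connected (consists of a single strongly connected component), let r ∈ V, and let ((W, B ∪ R), τ) be a witness-tree of G rooted at r with |R| = m red edges. Then the number of simple cycles of G that contain r is at most m. -/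
/-- A witness-tree of the directed graph `(V, E)` rooted at `r ∈ V`:
a finite labeled graph `((W, B ∪ R), lab)` with a distinguished root,
whose edges are partitioned into blue edges `B` and red edges `R`, such that
(1) all red edges lead back to the root; (2) no blue edge leads to the root;
(3) every non-root has at least one incoming blue edge; (4) every vertex has
at most one incoming blue edge; (5) the labeling respects the edges of `G`;
(6) the unfolding is complete; (7) distinct vertices on a common blue path
from the root have distinct labels; (8) the root is labeled by `r`. -/
structure WitnessTree {V : Type} [Fintype V] (E : V → V → Prop) (r : V) where
  W : Type
  fin : Fintype W
  root : W
  B : W → W → Prop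
  R : W → W → Prop
  disjoint : ∀ w w', ¬ (B w w' ∧ R w w')
  lab : W → V
  red_to_root : ∀ w w', R w w' → w' = root
  blue_not_to_root : ∀ w w', B w w' → w' ≠ root
  blue_exists : ∀ w', w' ≠ root → ∃ w, B w w'
  blue_unique : ∀ w₁ w₂ w', B w₁ w' → B w₂ w' → w₁ = w₂
  edge_label : ∀ w w', B w w' ∨ R w w' → E (lab w) (lab w')
  complete : ∀ w v', E (lab w) v' → ∃ w', (B w w' ∨ R w w') ∧ lab w' = v'
  path_distinct : ∀ (n : ℕ) (p : ℕ → W), p 0 = root →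
      (∀ i < n, B (p i) (p (i + 1))) →
      ∀ i j, i ≤ n → j ≤ n → p i ≠ p j → lab (p i) ≠ lab (p j)
  root_label : lab root = r

/-- The number of red edges of a witness-tree. -/
noncomputable def WitnessTree.redCount {V : Type} [Fintype V] {E : V → V → Prop} {r : V}
    (t : WitnessTree E r) : ℕ :=
  Nat.card {p : t.W × t.W // t.R p.1 p.2}

theorem SimpleCycle.ext_aux {V : Type} [Fintype V] {E : V → V → Prop} (c d : SimpleCycle E)
    (hC : c.C = d.C)
    (hη : ∀ v (h : v ∈ c.C) (h' : v ∈ d.C), (c.η ⟨v, h⟩).1 = (d.η ⟨v, h'⟩).1) : c = d := by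
  obtain ⟨C, h1, η, h2, h3, h4⟩ := c
  obtain ⟨D, k1, θ, k2, k3, k4⟩ := d
  dsimp only at hC hη
  subst hC
  have : η = θ := by
    funext v
    exact Subtype.ext (hη v.1 v.2 v.2)
  subst this
  rfl

/-- Every element of the cycle is an iterate of the root. -/
theorem SimpleCycle.exists_iter {V : Type} [Fintype V] {E : V → V → Prop} (c : SimpleCycle E)
    (x v : {v // v ∈ c.C}) : ∃ i < c.C.card, c.η^[i] x = v := by
  have hinj : Function.Injective (fun i : Fin c.C.card => c.η^[i.1] x) := by
    have key : ∀ a b : ℕ, a ≤ b → b < c.C.card → c.η^[a] x = c.η^[b] x → a = b := by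
      intro a b hab hb h
      have h1 : c.η^[a] (c.η^[b - a] x) = c.η^[a] x := by
        rw [← Function.iterate_add_apply, h]
        congr 2
        omega
      have h2 := (c.bij.injective.iterate a) h1
      have h3 := (c.period x (b - a)).1 h2
      have h4 := Nat.eq_zero_of_dvd_of_lt h3 (by omega)
      omega
    intro a b h
    rcases le_total a.1 b.1 with hab | hab
    · exact Fin.ext (key _ _ hab b.2 h)
    · exact Fin.ext (key _ _ hab a.2 h.symm).symm
  have hb := (Fintype.bijective_iff_injective_and_card _).2 ⟨hinj, by simp⟩
  obtain ⟨i, hi⟩ := hb.surjective v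
  exact ⟨i.1, i.2, hi⟩

theorem WitnessTree.blue_back {V : Type} [Fintype V] {E : V → V → Prop} {r : V}
    (t : WitnessTree E r) (p q : ℕ → t.W) (hp : p 0 = t.root) (hq : q 0 = t.root) :
    ∀ a b, (∀ i < a, t.B (p i) (p (i + 1))) → (∀ i < b, t.B (q i) (q (i + 1))) →
      p a = q b → a = b ∧ ∀ i ≤ a, p i = q i := by
  intro a
  induction a with
  | zero =>
    intro b _ hB h
    cases b with
    | zero => exact ⟨rfl, fun i hi => by rw [Nat.le_zero.1 hi, h]⟩
    | succ b => exact absurd (h.symm.trans hp) (t.blue_not_to_root _ _ (hB b (by omega)))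
  | succ a ih =>
    intro b hA hB h
    cases b with
    | zero => exact absurd (h.trans hq) (t.blue_not_to_root _ _ (hA a (by omega)))
    | succ b =>
      have h1 := hA a (by omega)
      rw [h] at h1
      have h2 := t.blue_unique _ _ _ h1 (hB b (by omega))
      obtain ⟨e, h3⟩ := ih b (fun i hi => hA i (by omega)) (fun i hi => hB i (by omega)) h2
      subst e
      refine ⟨rfl, fun i hi => ?_⟩
      rcases Nat.lt_or_ge a i with hlt | hge
      · have : i = a + 1 := by omega
        rw [this, h]
      · exact h3 i hge

theorem WitnessTree.exists_walk {V : Type} [Fintype V] {E : V → V → Prop} {r : V}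
    (t : WitnessTree E r) (s : ℕ → V) (h0 : s 0 = r) (hs : ∀ i, E (s i) (s (i + 1))) :
    ∃ p : ℕ → t.W, p 0 = t.root ∧ (∀ i, t.lab (p i) = s i) ∧
      ∀ i, t.B (p i) (p (i + 1)) ∨ t.R (p i) (p (i + 1)) := by
  have step : ∀ (i : ℕ) (w : {w // t.lab w = s i}),
      ∃ w' : {w // t.lab w = s (i + 1)}, t.B w.1 w'.1 ∨ t.R w.1 w'.1 := by
    rintro i ⟨w, hw⟩
    obtain ⟨w', h1, h2⟩ := t.complete w (s (i + 1)) (by rw [hw]; exact hs i)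
    exact ⟨⟨w', h2⟩, h1⟩
  choose f hf using step
  let P : (i : ℕ) → {w // t.lab w = s i} := fun i =>
    Nat.rec ⟨t.root, t.root_label.trans h0.symm⟩ (fun i w => f i w) i
  exact ⟨fun i => (P i).1, rfl, fun i => (P i).2, fun i => hf i (P i)⟩

theorem WitnessTree.exists_cycle_walk {V : Type} [Fintype V] {E : V → V → Prop} {r : V}
    (t : WitnessTree E r) (c : SimpleCycle E) (hr : r ∈ c.C) :
    ∃ p : ℕ → t.W, p 0 = t.root ∧ (∀ i, t.lab (p i) = (c.η^[i] ⟨r, hr⟩).1) ∧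
      (∀ i < c.C.card - 1, t.B (p i) (p (i + 1))) ∧ t.R (p (c.C.card - 1)) t.root := by
  have hk : 0 < c.C.card := c.nonempty.card_pos
  obtain ⟨p, h0, hl, he⟩ := t.exists_walk (fun i => (c.η^[i] ⟨r, hr⟩).1) rfl (by
    intro i
    simp only [Function.iterate_succ_apply']
    exact c.edge _)
  have hB : ∀ i < c.C.card - 1, t.B (p i) (p (i + 1)) := by
    intro i hi
    refine (he i).resolve_right fun hR => ?_
    have h1 := hl (i + 1)
    rw [t.red_to_root _ _ hR, t.root_label] at h1
    have h2 := (c.period ⟨r, hr⟩ (i + 1)).1 (Subtype.ext h1.symm)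
    have := Nat.le_of_dvd (by omega) h2
    omega
  refine ⟨p, h0, hl, hB, ?_⟩
  have hend := he (c.C.card - 1)
  rw [Nat.sub_add_cancel hk] at hend
  rcases hend with hb | hR
  · exfalso
    have hne := t.blue_not_to_root _ _ hb
    refine t.path_distinct c.C.card p h0 ?_ c.C.card 0 le_rfl (Nat.zero_le _) (by rwa [h0]) ?_
    · intro i hi
      rcases Nat.lt_or_ge i (c.C.card - 1) with h | h
      · exact hB i h
      · have : i = c.C.card - 1 := by omega
        rw [this, Nat.sub_add_cancel hk]
        exact hb
    · rw [hl, hl, (c.period ⟨r, hr⟩ c.C.card).2 dvd_rfl]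
      rfl
  · have h := t.red_to_root _ _ hR
    rwa [h] at hR

theorem SimpleCycle.eq_of_iter {V : Type} [Fintype V] {E : V → V → Prop} {r : V}
    (c d : SimpleCycle E) (hc : r ∈ c.C) (hd : r ∈ d.C) (hk : c.C.card = d.C.card)
    (h : ∀ i < c.C.card, (c.η^[i] ⟨r, hc⟩).1 = (d.η^[i] ⟨r, hd⟩).1) : c = d := by
  have h' : ∀ i ≤ c.C.card, (c.η^[i] ⟨r, hc⟩).1 = (d.η^[i] ⟨r, hd⟩).1 := by
    intro i hi
    rcases hi.lt_or_eq with hi | hi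
    · exact h i hi
    · rw [(c.period ⟨r, hc⟩ i).2 (by rw [hi]), (d.period ⟨r, hd⟩ i).2 (by rw [hi, hk])]
  have hsub : c.C ⊆ d.C := by
    intro v hv
    obtain ⟨i, hi, e⟩ := c.exists_iter ⟨r, hc⟩ ⟨v, hv⟩
    have h1 := h i hi
    rw [e] at h1
    rw [show v = _ from h1]
    exact (d.η^[i] ⟨r, hd⟩).2
  refine SimpleCycle.ext_aux c d (Finset.eq_of_subset_of_card_le hsub hk.ge) ?_
  intro v hv hv'
  obtain ⟨i, hi, e⟩ := c.exists_iter ⟨r, hc⟩ ⟨v, hv⟩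
  have h1 := h i hi
  have h2 := h' (i + 1) hi
  rw [e] at h1
  rw [Function.iterate_succ_apply', Function.iterate_succ_apply', e] at h2
  rw [h2]
  congr 2
  exact Subtype.ext h1.symm

/-- If `G = (V, E)` is strongly connected, `r ∈ V`, and `((W, B ∪ R), lab)` is a
witness-tree of `G` rooted at `r` with `m` red edges, then the number of simple
cycles of `G` containing `r` is at most `m`. -/
theorem card_simpleCycle_through_root_le_redCount
    {V : Type} [Fintype V] (E : V → V → Prop)
    (hsc : ∀ u v : V, Relation.ReflTransGen E u v)
    (r : V) (t : WitnessTree E r) (m : ℕ) (hm : t.redCount = m) :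
    Nat.card {c : SimpleCycle E // r ∈ c.C} ≤ m := by
  classical
  subst hm
  haveI := t.fin
  choose p h0 hl hB hR using fun c : {c : SimpleCycle E // r ∈ c.C} =>
    t.exists_cycle_walk c.1 c.2
  refine Nat.card_le_card_of_injective
    (fun c => (⟨(p c (c.1.C.card - 1), t.root), hR c⟩ : {p : t.W × t.W // t.R p.1 p.2})) ?_
  intro c d hcd
  have he : p c (c.1.C.card - 1) = p d (d.1.C.card - 1) :=
    congrArg (fun x : {p : t.W × t.W // t.R p.1 p.2} => x.1.1) hcd
  obtain ⟨e, hpq⟩ := t.blue_back (p c) (p d) (h0 c) (h0 d) _ _ (hB c) (hB d) he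
  have k1 : 0 < c.1.C.card := c.1.nonempty.card_pos
  have k2 : 0 < d.1.C.card := d.1.nonempty.card_pos
  refine Subtype.ext (SimpleCycle.eq_of_iter c.1 d.1 c.2 d.2 (by omega) ?_)
  intro i hi
  rw [← hl c i, ← hl d i, hpq i (by omega)]
end

section
/- For every k ≥ 1, consider the directed graph G_k with vertex set {s} ∪ {a_1, b_1, a_2, b_2, …, a_k, b_k} (so 2k+1 vertices) and edge set consisting of: the edges (s, a_1) and (s, b_1); for every 1 ≤ i < k, the four edges (a_i, a_{i+1}), (a_i, b_{i+1}), (b_i, a_{i+1}), (b_i, b_{i+1}); and the edges (a_k, s) and (b_k, s). Then G_k has exactly 2^k simple cycles. -/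
section Helpers

open scoped Fin.CommRing Fin.NatCast

/-- level of a vertex -/
def ladLvl {k : ℕ} : Option (Fin k × Bool) → Fin (k + 1)
  | none => 0
  | some (i, _) => i.succ

/-- path through the ladder -/
def ladPath {k : ℕ} (g : Fin k → Bool) : Fin (k + 1) → Option (Fin k × Bool) :=
  Fin.cases none (fun i => some (i, g i))

theorem ladLvl_path {k : ℕ} (g : Fin k → Bool) (i : Fin (k + 1)) :
    ladLvl (ladPath g i) = i := by
  refine Fin.cases ?_ (fun i => ?_) i <;> simp [ladPath, ladLvl]

theorem iter_lvl {k : ℕ} {C : Finset (Option (Fin k × Bool))}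
    (η : {v // v ∈ C} → {v // v ∈ C}) (h : ∀ v, ladLvl (η v).1 = ladLvl v.1 + 1)
    (n : ℕ) (v : {v // v ∈ C}) : ladLvl (η^[n] v).1 = ladLvl v.1 + (n : Fin (k + 1)) := by
  induction n with
  | zero => simp
  | succ n ih => rw [Function.iterate_succ_apply', h, ih, Nat.cast_succ, add_assoc]

theorem path_of_mem {k : ℕ} (g : Fin k → Bool) {v : Option (Fin k × Bool)}
    (hv : v ∈ Finset.univ.image (ladPath g)) : ladPath g (ladLvl v) = v := by
  obtain ⟨i, -, rfl⟩ := Finset.mem_image.1 hv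
  rw [ladLvl_path]

theorem card_path {k : ℕ} (g : Fin k → Bool) :
    (Finset.univ.image (ladPath g)).card = k + 1 := by
  rw [Finset.card_image_of_injective _ (Function.LeftInverse.injective (ladLvl_path g))]
  simp

/-- the cycle of a path -/
def ladCycle {k : ℕ} {E : Option (Fin k × Bool) → Option (Fin k × Bool) → Prop}
    (hE : ∀ x y, E x y ↔ ladLvl y = ladLvl x + 1) (g : Fin k → Bool) : SimpleCycle E where
  C := Finset.univ.image (ladPath g)
  nonempty := ⟨ladPath g 0, Finset.mem_image_of_mem _ (Finset.mem_univ _)⟩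
  η := fun v => ⟨ladPath g (ladLvl v.1 + 1), Finset.mem_image_of_mem _ (Finset.mem_univ _)⟩
  bij := by
    refine Finite.injective_iff_bijective.1 ?_
    intro v w h
    have h1 := congrArg (fun x => ladLvl x.1) h
    simp only [ladLvl_path, add_left_inj] at h1
    apply Subtype.ext
    rw [← path_of_mem g v.2, ← path_of_mem g w.2, h1]
  edge := by
    intro v
    rw [hE, ladLvl_path]
  period := by
    intro v n
    rw [card_path, ← Fin.natCast_eq_zero]
    have h := iter_lvl (C := Finset.univ.image (ladPath g))
      (fun v => ⟨ladPath g (ladLvl v.1 + 1), Finset.mem_image_of_mem _ (Finset.mem_univ _)⟩)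
      (fun v => by dsimp only; rw [ladLvl_path]) n v
    constructor
    · intro h1
      rw [h1] at h
      simpa using h
    · intro h1
      rw [h1, add_zero] at h
      apply Subtype.ext
      rw [← path_of_mem g v.2, ← h]
      exact (path_of_mem g (Subtype.prop _)).symm

theorem cycle_ext {k : ℕ} {E : Option (Fin k × Bool) → Option (Fin k × Bool) → Prop}
    (hE : ∀ x y, E x y ↔ ladLvl y = ladLvl x + 1) (c d : SimpleCycle E) (h : c.C = d.C)
    (hi : ∀ v ∈ c.C, ∀ w ∈ c.C, ladLvl v = ladLvl w → v = w) : c = d := by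
  obtain ⟨C, n, η, b, e, p⟩ := c
  obtain ⟨C', n', η', b', e', p'⟩ := d
  dsimp only at h hi
  subst h
  have : η = η' := by
    funext v
    apply Subtype.ext
    apply hi _ (Subtype.prop _) _ (Subtype.prop _)
    rw [(hE _ _).1 (e v), (hE _ _).1 (e' v)]
  subst this
  rfl

theorem ladCycle_bij {k : ℕ} {E : Option (Fin k × Bool) → Option (Fin k × Bool) → Prop}
    (hE : ∀ x y, E x y ↔ ladLvl y = ladLvl x + 1) : Function.Bijective (ladCycle hE) := by
  constructor
  · intro g g' h
    have hC : Finset.univ.image (ladPath g) = Finset.univ.image (ladPath g') :=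
      congrArg SimpleCycle.C h
    funext i
    have hm : ladPath g i.succ ∈ Finset.univ.image (ladPath g') := by
      rw [← hC]; exact Finset.mem_image_of_mem _ (Finset.mem_univ _)
    have := path_of_mem g' hm
    rw [ladLvl_path] at this
    simp [ladPath] at this
    exact this.symm
  · intro c
    have hs : ∀ j : Fin (k + 1), ∀ v : {v // v ∈ c.C}, ladLvl (c.η^[(j - ladLvl v.1).val] v).1 = j := by
      intro j v
      rw [iter_lvl c.η (fun v => (hE _ _).1 (c.edge v))]
      simp
    obtain ⟨v0, hv0⟩ := c.nonempty
    have hz : ∀ v : Option (Fin k × Bool), ladLvl v = 0 → v = none := by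
      rintro (_ | ⟨i, b⟩) h
      · rfl
      · exact absurd h (Fin.succ_ne_zero i)
    have hnone : none ∈ c.C := by
      have := hz _ (hs 0 ⟨v0, hv0⟩)
      rw [← this]; exact Subtype.prop _
    have hg : ∀ i : Fin k, ∃ b, some (i, b) ∈ c.C := by
      intro i
      have h := hs i.succ ⟨v0, hv0⟩
      generalize c.η^[_] _ = w at h
      obtain ⟨(_ | ⟨j, b⟩), hw⟩ := w
      · exact absurd h.symm (Fin.succ_ne_zero i)
      · have : j = i := Fin.succ_injective _ h
        subst this
        exact ⟨b, hw⟩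
    choose g hg using hg
    have hsub : Finset.univ.image (ladPath g) ⊆ c.C := by
      intro v hv
      obtain ⟨i, -, rfl⟩ := Finset.mem_image.1 hv
      refine Fin.cases ?_ (fun i => ?_) i
      · exact hnone
      · exact hg i
    have hcard : c.C.card ≤ k + 1 := by
      apply Nat.le_of_dvd (Nat.succ_pos k)
      rw [← c.period ⟨none, hnone⟩]
      apply Subtype.ext
      apply hz
      rw [iter_lvl c.η (fun v => (hE _ _).1 (c.edge v)), (Fin.natCast_eq_zero).2 dvd_rfl]
      rfl
    have hC := Finset.eq_of_subset_of_card_le hsub (by rw [card_path]; exact hcard)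
    refine ⟨g, cycle_ext hE _ _ hC ?_⟩
    intro v hv w hw h
    rw [← path_of_mem g hv, ← path_of_mem g hw, h]

end Helpers

/-- For `k ≥ 1`, the directed graph `G_k` with vertices
`s` (encoded as `none`) and `a_1, b_1, …, a_k, b_k` (encoded as `some (i, ff)` and
`some (i, tt)` for `i : Fin k`), and with edges from `s` to `a_1` and `b_1`, from
each of `a_i, b_i` to each of `a_{i+1}, b_{i+1}` for `1 ≤ i < k`, and from `a_k`
and `b_k` back to `s`, has exactly `2 ^ k` simple cycles. -/
theorem card_simpleCycle_ladder_eq_two_pow (k : ℕ) (hk : 1 ≤ k) :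
    Nat.card (SimpleCycle (V := Option (Fin k × Bool)) (fun x y =>
      match x, y with
      | none, some (i, _) => (i : ℕ) = 0
      | some (i, _), some (j, _) => (j : ℕ) = (i : ℕ) + 1
      | some (i, _), none => (i : ℕ) = k - 1
      | none, none => False)) = 2 ^ k := by
  rw [← Nat.card_eq_of_bijective _ (ladCycle_bij (k := k) ?_)]
  · simp
  · obtain ⟨k, rfl⟩ : ∃ m, k = m + 1 := ⟨k - 1, by omega⟩
    rintro (_ | ⟨i, b⟩) (_ | ⟨j, b'⟩)
    · simp [ladLvl]
    · rw [Fin.ext_iff, Fin.val_add_one]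
      simp only [ladLvl, Fin.ext_iff, Fin.val_last, Fin.val_succ, Fin.val_zero]
      change (j : ℕ) = 0 ↔ _
      split_ifs <;> first | omega | contradiction
    · rw [Fin.ext_iff, Fin.val_add_one]
      simp only [ladLvl, Fin.ext_iff, Fin.val_last, Fin.val_succ, Fin.val_zero]
      have := i.2
      split_ifs <;> simp <;> omega
    · rw [Fin.ext_iff, Fin.val_add_one]
      simp only [ladLvl, Fin.ext_iff, Fin.val_last, Fin.val_succ]
      have := j.2
      split_ifs <;> simp <;> omega
end
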